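/- Let z : ℝ → ℝ² be continuously differentiable on a neighborhood of α ∈ ℝ with z'(α) ≠ 0. Then z(α) ≠ z(α−β) for all sufficiently small β ≠ 0, so BR(α,β) is defined for such β, and lim_{β→0, β≠0} β·BR(α,β) = −(z'(α))^⊥ / ‖z'(α)‖². That is, the coefficient O₋₁(α) of the principal (order β⁻¹) part of the Laurent expansion of the Birkhoff–Rott kernel at β = 0 equals −(z'(α))^⊥/‖z'(α)‖². -/

import Mathlib

/- STATEMENT 9: the principal (order β⁻¹) coefficient of the Laurent expansion
of the Birkhoff–Rott kernel BR(α,β) = −(z(α)−z(α−β))^⊥/‖z(α)−z(α−β)‖² at β = 0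
is O₋₁(α) = −(z'(α))^⊥/‖z'(α)‖². -/

noncomputable section

/-- The perpendicular a^⊥ = (a₂, −a₁) in the Euclidean plane. -/
def perp (a : EuclideanSpace ℝ (Fin 2)) : EuclideanSpace ℝ (Fin 2) :=
  (WithLp.equiv 2 (Fin 2 → ℝ)).symm ![a 1, -(a 0)]

/-- The Birkhoff–Rott kernel BR(α,β) = −(z(α)−z(α−β))^⊥ / ‖z(α)−z(α−β)‖². -/
def BR (z : ℝ → EuclideanSpace ℝ (Fin 2)) (α β : ℝ) : EuclideanSpace ℝ (Fin 2) :=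
  (-(1 / ‖z α - z (α - β)‖ ^ 2)) • perp (z α - z (α - β))

/-!
The vortex kernel `v ↦ -v^⊥ / ‖v‖²` is homogeneous of degree `-1`, so `β • BR z α β` is its value at
the difference quotient `β⁻¹ • (z α - z (α - β))`. This quotient tends to `z' α ≠ 0`, and the kernel
is continuous away from `0`.
-/

section

open Filter Topology

theorem perp_smul (c : ℝ) (a : EuclideanSpace ℝ (Fin 2)) : perp (c • a) = c • perp a := by
  ext i
  fin_cases i <;> simp [perp]

@[fun_prop]
theorem continuous_perp : Continuous perp := by
  refine (PiLp.continuous_toLp 2 fun _ : Fin 2 => ℝ).comp (continuous_pi fun i => ?_)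
  fin_cases i
  · exact PiLp.continuous_apply 2 _ 1
  · exact (PiLp.continuous_apply 2 _ 0).neg

/-- The velocity kernel `-v^⊥ / ‖v‖²` of a planar point vortex, without the usual factor `1 / 2π`.
The Birkhoff–Rott kernel is its value at a chord of the curve. Its value at `0` is `0`. -/
def vortexKernel (v : EuclideanSpace ℝ (Fin 2)) : EuclideanSpace ℝ (Fin 2) :=
  (-(1 / ‖v‖ ^ 2)) • perp v

theorem BR_eq_vortexKernel_sub (z : ℝ → EuclideanSpace ℝ (Fin 2)) (α β : ℝ) :
    BR z α β = vortexKernel (z α - z (α - β)) :=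
  rfl

theorem vortexKernel_smul (c : ℝ) (v : EuclideanSpace ℝ (Fin 2)) :
    vortexKernel (c • v) = c⁻¹ • vortexKernel v := by
  rw [vortexKernel, vortexKernel, perp_smul, smul_smul, smul_smul, norm_smul, mul_pow,
    Real.norm_eq_abs, sq_abs]
  congr 1
  field_simp

theorem continuousAt_vortexKernel {v : EuclideanSpace ℝ (Fin 2)} (hv : v ≠ 0) :
    ContinuousAt vortexKernel v := by
  have hnorm : ‖v‖ ^ 2 ≠ 0 := pow_ne_zero 2 (norm_ne_zero_iff.mpr hv)
  unfold vortexKernel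
  fun_prop (disch := exact hnorm)

theorem tendsto_backward_slope_zero {𝕜 E : Type*} [NontriviallyNormedField 𝕜]
    [NormedAddCommGroup E] [NormedSpace 𝕜 E] {f : 𝕜 → E} {f' : E} {x : 𝕜}
    (hf : HasDerivAt f f' x) :
    Tendsto (fun h : 𝕜 => h⁻¹ • (f x - f (x - h))) (𝓝[≠] 0) (𝓝 f') := by
  have hneg : Tendsto (Neg.neg : 𝕜 → 𝕜) (𝓝[≠] 0) (𝓝[≠] 0) := by
    simpa only [neg_zero] using
      (hasDerivAt_neg (0 : 𝕜)).tendsto_nhdsNE (neg_ne_zero.mpr one_ne_zero)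
  refine (hf.tendsto_slope_zero.comp hneg).congr fun h => ?_
  rw [Function.comp_apply, inv_neg, neg_smul, ← smul_neg, neg_sub, ← sub_eq_add_neg]

theorem BR_laurent_coefficient_neg_one_general {z : ℝ → EuclideanSpace ℝ (Fin 2)} {α : ℝ}
    {z' : EuclideanSpace ℝ (Fin 2)} (hz : HasDerivAt z z' α) (hz' : z' ≠ 0) :
    (∀ᶠ β in 𝓝[≠] (0 : ℝ), z α ≠ z (α - β))
    ∧ Tendsto (fun β : ℝ => β • BR z α β) (𝓝[≠] 0) (𝓝 ((-(1 / ‖z'‖ ^ 2)) • perp z')) := by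
  have hquot : Tendsto (fun β : ℝ => β⁻¹ • (z α - z (α - β))) (𝓝[≠] 0) (𝓝 z') :=
    tendsto_backward_slope_zero hz
  constructor
  · filter_upwards [hquot.eventually_ne hz'] with β hβ
    exact sub_ne_zero.mp (right_ne_zero_of_smul hβ)
  · have hkernel : Tendsto (fun β : ℝ => vortexKernel (β⁻¹ • (z α - z (α - β)))) (𝓝[≠] 0)
        (𝓝 (vortexKernel z')) :=
      (continuousAt_vortexKernel hz').tendsto.comp hquot
    refine hkernel.congr fun β => ?_
    rw [vortexKernel_smul, inv_inv, BR_eq_vortexKernel_sub]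

end

theorem BR_laurent_coefficient_neg_one
    (z : ℝ → EuclideanSpace ℝ (Fin 2)) (α : ℝ)
    (U : Set ℝ) (hU : U ∈ nhds α) (hz : ContDiffOn ℝ 1 z U)
    (hz' : deriv z α ≠ 0) :
    (∀ᶠ β in nhdsWithin 0 {(0 : ℝ)}ᶜ, z α ≠ z (α - β))
    ∧ Filter.Tendsto (fun β : ℝ => β • BR z α β) (nhdsWithin 0 {(0 : ℝ)}ᶜ)
        (nhds ((-(1 / ‖deriv z α‖ ^ 2)) • perp (deriv z α))) :=
  BR_laurent_coefficient_neg_one_general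
    ((hz.contDiffAt hU).differentiableAt one_ne_zero).hasDerivAt hz'

end
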